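/- Let (T, R, A) be weakly G-quasiapproximable, and let B > 0 be as in the compact-approximation lemma. Then for every integer i and every object F ∈ T̄^c ∩ R_i there is a sequence of compact objects E_1 → E_2 → E_3 → ⋯ mapping compatibly to F such that for all n ≥ 1, E_n ∈ G^{[-B-n-i+1, B-i]} and Cone(E_n → F) ∈ R_{i+n}. If (T, R, A) is moreover G-quasiapproximable, the sequence can be chosen with E_n ∈ G^{[-B-n-i, B-i]}_{nB} for all n ≥ 1. In either case, the non-canonical map Hocolim E_n → F is an isomorphism. -/

import Mathlib

namespace GApprox

open CategoryTheory CategoryTheory.Limits CategoryTheory.Pretriangulated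

universe w v u

variable (C : Type u) [Category.{v} C] [HasZeroObject C] [HasShift C ℤ]
  [Preadditive C] [∀ n : ℤ, (shiftFunctor C n).Additive] [Pretriangulated C]
  [HasCoproducts.{v} C]

/-- The right orthogonal of a class of objects. -/
def rOrth (A : Set C) : Set C := {X | ∀ a ∈ A, ∀ f : a ⟶ X, f = 0}

/-- The left orthogonal of a class of objects. -/
def lOrth (A : Set C) : Set C := {X | ∀ a ∈ A, ∀ f : X ⟶ a, f = 0}

/-- `Hom(A, B) = 0`. -/
def homZero (A B : Set C) : Prop := ∀ a ∈ A, ∀ b ∈ B, ∀ f : a ⟶ b, f = 0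

/-- The star operation `A ⋆ B`: objects `Y` admitting a distinguished triangle
`X ⟶ Y ⟶ Z ⟶ ΣX` with `X ∈ A` and `Z ∈ B`. -/
def starSet (A B : Set C) : Set C :=
  {Y | ∃ (X Z : C) (f : X ⟶ Y) (g : Y ⟶ Z) (h : Z ⟶ X⟦(1 : ℤ)⟧),
    Triangle.mk f g h ∈ (distTriang C) ∧ X ∈ A ∧ Z ∈ B}

/-- The (strictly full) shift `Σⁿ A` of a class of objects. -/
def shiftSet (n : ℤ) (A : Set C) : Set C :=
  {X | ∃ a ∈ A, Nonempty (X ≅ (shiftFunctor C n).obj a)}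

/-- An object is compact if any map to a coproduct factors through a finite subcoproduct. -/
def IsCompactObj (X : C) : Prop :=
  ∀ (α : Type v) (f : α → C) (g : X ⟶ ∐ f),
    ∃ (s : Finset α) (h : X ⟶ ∐ (fun i : {a : α // a ∈ s} => f i.1)),
      g = h ≫ Sigma.desc (fun i => Sigma.ι f i.1)

/-- The class of compact objects `T^c`. -/
def compacts : Set C := {X | IsCompactObj C X}

/-- The category is compactly generated. -/
def CompactlyGenerated : Prop :=
  ∀ X : C, (∀ K ∈ compacts C, ∀ f : K ⟶ X, f = 0) → IsZero X

/-- Closure under direct summands (retracts), `smd`. -/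
def smd (A : Set C) : Set C :=
  {X | ∃ Y ∈ A, ∃ (i : X ⟶ Y) (r : Y ⟶ X), i ≫ r = 𝟙 X}

/-- Closure of a class of objects under finite direct sums and extensions (`coprod`). -/
inductive extClosure (U : Set C) : C → Prop
  | of {X : C} : X ∈ U → extClosure U X
  | zero {X : C} : IsZero X → extClosure U X
  | ext {X Y Z : C} (f : X ⟶ Y) (g : Y ⟶ Z) (h : Z ⟶ X⟦(1 : ℤ)⟧) :
      Triangle.mk f g h ∈ (distTriang C) → extClosure U X → extClosure U Z → extClosure U Y

/-- Closure of a class of objects under arbitrary coproducts, extensions and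
direct summands. -/
inductive bigClosure (U : Set C) : C → Prop
  | of {X : C} : X ∈ U → bigClosure U X
  | zero {X : C} : IsZero X → bigClosure U X
  | coprod {α : Type v} (f : α → C) :
      (∀ i, bigClosure U (f i)) → ∀ {X : C}, (X ≅ ∐ f) → bigClosure U X
  | ext {X Y Z : C} (f : X ⟶ Y) (g : Y ⟶ Z) (h : Z ⟶ X⟦(1 : ℤ)⟧) :
      Triangle.mk f g h ∈ (distTriang C) → bigClosure U X → bigClosure U Z → bigClosure U Y
  | retract {X Y : C} (i : X ⟶ Y) (r : Y ⟶ X) :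
      i ≫ r = 𝟙 X → bigClosure U Y → bigClosure U X

/-- Closure of a class of objects under finite direct sums, `add`. -/
def addClosure (U : Set C) : Set C :=
  {X | ∃ (n : ℕ) (f : ULift.{v} (Fin n) → C), (∀ i, f i ∈ U) ∧ Nonempty (X ≅ ∐ f)}

/-- Closure of a class of objects under arbitrary coproducts, `Add`. -/
def bigAddClosure (U : Set C) : Set C :=
  {X | ∃ (α : Type v) (f : α → C), (∀ i, f i ∈ U) ∧ Nonempty (X ≅ ∐ f)}

/-- `coprod_n(U)`. -/
def coprodPow (U : Set C) : ℕ → Set C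
  | 0 => {X | IsZero X}
  | n + 1 => starSet C (addClosure C U) (coprodPow U n)

/-- `Coprod_n(U)`. -/
def coprodPowBig (U : Set C) : ℕ → Set C
  | 0 => {X | IsZero X}
  | n + 1 => starSet C (bigAddClosure C U) (coprodPowBig U n)

/-- `G[a,b] = ∪ { G^m : a ≤ m ≤ b }`. -/
def unionIcc (G : ℤ → Set C) (a b : ℤ) : Set C := ⋃ m ∈ Set.Icc a b, G m

/-- `G(-∞,b] = ∪ { G^m : m ≤ b }`. -/
def unionIic (G : ℤ → Set C) (b : ℤ) : Set C := ⋃ m ∈ Set.Iic b, G m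

/-- `G(-∞,∞) = ∪ { G^m : m ∈ ℤ }`. -/
def unionAll (G : ℤ → Set C) : Set C := ⋃ m : ℤ, G m

/-- `G^{[a,b]} = smd(coprod(G[a,b]))`. -/
def gInt (G : ℤ → Set C) (a b : ℤ) : Set C :=
  smd C {X | extClosure C (unionIcc C G a b) X}

/-- `G^{(-∞,b]} = smd(coprod(G(-∞,b]))`. -/
def gIic (G : ℤ → Set C) (b : ℤ) : Set C :=
  smd C {X | extClosure C (unionIic C G b) X}

/-- `G^{[a,b]}_k = smd(coprod_k(G[a,b]))`. -/
def gIntPow (G : ℤ → Set C) (a b k : ℤ) : Set C :=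
  smd C (coprodPow C (unionIcc C G a b) k.toNat)

/-- `Ḡ^{[a,b]}`. -/
def gBarInt (G : ℤ → Set C) (a b : ℤ) : Set C :=
  {X | bigClosure C (unionIcc C G a b) X}

/-- `Ḡ^{(-∞,b]}`. -/
def gBarIic (G : ℤ → Set C) (b : ℤ) : Set C :=
  {X | bigClosure C (unionIic C G b) X}

/-- `Ḡ^{[a,b]}_k = smd(Coprod_k(G[a,b]))`. -/
def gBarIntPow (G : ℤ → Set C) (a b k : ℤ) : Set C :=
  smd C (coprodPowBig C (unionIcc C G a b) k.toNat)

/-- `M^G_n := G^{(-∞,-n]}`. -/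
def MG (G : ℤ → Set C) (n : ℤ) : Set C := gIic C G (-n)

/-- `R^G_n := ⊥((M^G_n)^⊥)`, orthogonals taken in the whole category. -/
def RG (G : ℤ → Set C) (n : ℤ) : Set C := lOrth C (rOrth C (MG C G n))

/-- A pre-generating sequence. -/
structure IsPreGenSeq (G : ℤ → Set C) : Prop where
  compact : ∀ i : ℤ, G i ⊆ compacts C
  generates : smd C {X | extClosure C (unionAll C G) X} = compacts C

/-- A generating sequence. -/
structure IsGenSeq (G : ℤ → Set C) extends IsPreGenSeq C G : Prop where
  shift_cond : ∀ n : ℤ,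
    shiftSet C (-1) (G n) ∪ G n ∪ shiftSet C 1 (G n) ⊆ gInt C G (n - 1) (n + 1)

/-- A finite generating sequence. -/
structure IsFinGenSeq (G : ℤ → Set C) extends IsGenSeq C G : Prop where
  finite : ∀ i : ℤ, (G i).Finite

/-- ℕ-equivalence of generating sequences. -/
def GenSeqNEquiv (G G' : ℤ → Set C) : Prop :=
  ∃ N : ℤ, 0 ≤ N ∧ (∀ n : ℤ, G' n ⊆ gInt C G (n - N) (n + N)) ∧
    ∀ n : ℤ, G n ⊆ gInt C G' (n - N) (n + N)

/-- ℕ-equivalence of (extended good) metrics. -/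
def MetricNEquiv (M N : ℤ → Set C) : Prop :=
  ∃ n : ℤ, 0 ≤ n ∧ (∀ i : ℤ, M (i + n) ⊆ N i) ∧ ∀ i : ℤ, N (i + n) ⊆ M i

/-- An extended good metric. -/
structure IsExtGoodMetric (M : ℤ → Set C) : Prop where
  zero_mem : ∀ (n : ℤ) (X : C), IsZero X → X ∈ M n
  iso_closed : ∀ (n : ℤ) ⦃X Y : C⦄, (X ≅ Y) → X ∈ M n → Y ∈ M n
  star_subset : ∀ n : ℤ, starSet C (M n) (M n) ⊆ M n
  shift_one : ∀ n : ℤ, shiftSet C 1 (M (n + 1)) ⊆ M n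
  antitone : ∀ n : ℤ, M (n + 1) ⊆ M n
  shift_neg_one : ∀ n : ℤ, shiftSet C (-1) (M (n + 1)) ⊆ M n

/-- An orthogonal metric. -/
structure IsOrthMetric (M : ℤ → Set C) extends IsExtGoodMetric C M : Prop where
  orth : ∀ n : ℤ, lOrth C (rOrth C (M n)) = M n

/-- The closure of the compacts `T̄^c := ∩ₙ T^c ⋆ Rₙ`. -/
def closCompacts (Rm : ℤ → Set C) : Set C := ⋂ n : ℤ, starSet C (compacts C) (Rm n)

/-- `(T, R, A)` is `G`-preapproximable. -/
structure IsGPreApprox (G Rm : ℤ → Set C) (A : ℤ) : Prop where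
  orthMetric : IsOrthMetric C Rm
  A_pos : 0 < A
  cond0 : ∀ i : ℤ, MG C G i ⊆ ⋃ n ∈ {n : ℤ | |n| ≤ A}, shiftSet C n (MG C G (i + 1))
  cond1 : ∀ i : ℤ, MG C G (i + A) ⊆ Rm i ∩ compacts C
  cond2 : ∀ n : ℤ, ∃ N : ℤ, ∀ i : ℤ, N ≤ i → homZero C (G n) (Rm i)

/-- There is a distinguished triangle `E ⟶ F ⟶ D ⟶ ΣE` with `E ∈ S` and `D ∈ D`. -/
def approxTriangle (F : C) (S D : Set C) : Prop :=
  ∃ (E Dd : C) (f : E ⟶ F) (g : F ⟶ Dd) (h : Dd ⟶ E⟦(1 : ℤ)⟧),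
    Triangle.mk f g h ∈ (distTriang C) ∧ E ∈ S ∧ Dd ∈ D

/-- `(T, R, A)` is weakly `G`-approximable. -/
structure IsWeakGApprox (G Rm : ℤ → Set C) (A : ℤ) extends IsGPreApprox C G Rm A : Prop where
  hom_vanish : ∀ n i : ℤ, A ≤ n + i → homZero C (G n) (Rm i)
  approx : ∀ i : ℤ, ∀ F ∈ Rm i,
    approxTriangle C F (gBarInt C G (-A - i) (A - i)) (Rm (i + 1))

/-- `(T, R, A)` is `G`-approximable. -/
structure IsGApprox (G Rm : ℤ → Set C) (A : ℤ) extends IsWeakGApprox C G Rm A : Prop where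
  approx' : ∀ i : ℤ, ∀ F ∈ Rm i,
    approxTriangle C F (gBarIntPow C G (-A - i) (A - i) A) (Rm (i + 1))

/-- `(T, R, A)` is weakly `G`-quasiapproximable. -/
structure IsWeakGQuasiApprox (G Rm : ℤ → Set C) (A : ℤ) extends IsGPreApprox C G Rm A : Prop where
  hom_vanish : ∀ n i : ℤ, A ≤ n + i → homZero C (G n) (Rm i)
  approx : ∀ i : ℤ, ∀ F ∈ Rm i ∩ closCompacts C Rm,
    approxTriangle C F (gBarInt C G (-A - i) (A - i)) (Rm (i + 1) ∩ closCompacts C Rm)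

/-- `(T, R, A)` is `G`-quasiapproximable. -/
structure IsGQuasiApprox (G Rm : ℤ → Set C) (A : ℤ) extends IsWeakGQuasiApprox C G Rm A : Prop where
  approx' : ∀ i : ℤ, ∀ F ∈ Rm i ∩ closCompacts C Rm,
    approxTriangle C F (gBarIntPow C G (-A - i) (A - i) A) (Rm (i + 1) ∩ closCompacts C Rm)

/-- The coproduct of a sequence of objects. -/
noncomputable def seqCoprod (E : ℕ → C) : C := ∐ (fun n : ULift.{v} ℕ => E n.down)

/-- The canonical inclusion into the coproduct of a sequence. -/
noncomputable def seqInj (E : ℕ → C) (n : ℕ) : E n ⟶ seqCoprod C E :=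
  Sigma.ι (fun n : ULift.{v} ℕ => E n.down) (ULift.up n)

/-- The map `1 - shift` on the coproduct of a sequence. -/
noncomputable def oneMinusShift (E : ℕ → C) (e : ∀ n, E n ⟶ E (n + 1)) :
    seqCoprod C E ⟶ seqCoprod C E :=
  Sigma.desc (fun n => seqInj C E n.down - e n.down ≫ seqInj C E (n.down + 1))

/-- `H`, equipped with `π`, `δ`, is a homotopy colimit of the sequence `E`. -/
def IsHocolim (E : ℕ → C) (e : ∀ n, E n ⟶ E (n + 1)) (H : C)
    (π : seqCoprod C E ⟶ H) (δ : H ⟶ (seqCoprod C E)⟦(1 : ℤ)⟧) : Prop :=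
  Triangle.mk (oneMinusShift C E e) π δ ∈ (distTriang C)

/-- A single compact generator. -/
def IsCompactGenerator (G₀ : C) : Prop :=
  IsCompactObj C G₀ ∧ ∀ X : C, (∀ n : ℤ, ∀ f : (shiftFunctor C n).obj G₀ ⟶ X, f = 0) → IsZero X

/-- The strictly full subcategory `{Σʲ G₀}`. -/
def singletonShift (G₀ : C) (j : ℤ) : Set C :=
  {X | Nonempty (X ≅ (shiftFunctor C j).obj G₀)}

/-- The generating sequence `Gⁿ := {Σ⁻ⁿ G₀}`. -/
def genSeqNeg (G₀ : C) (n : ℤ) : Set C := singletonShift C G₀ (-n)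

/-- The generating sequence `Gⁿ := {Σⁿ G₀}`. -/
def genSeqPos (G₀ : C) (n : ℤ) : Set C := singletonShift C G₀ n

section helpers
set_option linter.unusedSectionVars false
variable {C}

open Classical in
/-- The projection onto a subset of the summands. -/
noncomputable def pS {α : Type v} (f : α → C) (s : Set α) : ∐ f ⟶ ∐ f :=
  Sigma.desc (fun a => if a ∈ s then Sigma.ι f a else 0)

lemma ι_pS {α : Type v} (f : α → C) (s : Set α) (a : α) (h : a ∈ s) :
    Sigma.ι f a ≫ pS f s = Sigma.ι f a := by
  simp [pS, h]

lemma ι_pS' {α : Type v} (f : α → C) (s : Set α) (a : α) (h : a ∉ s) :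
    Sigma.ι f a ≫ pS f s = 0 := by
  simp [pS, h]

lemma pS_comp {α : Type v} (f : α → C) (s t : Set α) (h : s ⊆ t) :
    pS f s ≫ pS f t = pS f s := by
  apply Sigma.hom_ext
  intro a
  by_cases ha : a ∈ s
  · rw [← Category.assoc, ι_pS f s a ha, ι_pS f t a (h ha)]
  · rw [← Category.assoc, ι_pS' f s a ha, zero_comp]

lemma pS_mono {α : Type v} (f : α → C) {s t : Set α} (h : s ⊆ t) {X : C} (g : X ⟶ ∐ f)
    (hg : g ≫ pS f s = g) : g ≫ pS f t = g := by
  rw [← hg, Category.assoc, pS_comp f s t h]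

lemma compact_iff (X : C) : X ∈ compacts C ↔ ∀ (α : Type v) (f : α → C) (g : X ⟶ ∐ f),
    ∃ s : Finset α, g ≫ pS f (s : Set α) = g := by
  constructor
  · intro h α f g
    obtain ⟨s, k, hk⟩ := h α f g
    refine ⟨s, ?_⟩
    rw [hk, Category.assoc]
    congr 1
    apply Sigma.hom_ext
    rintro ⟨a, ha⟩
    simp [ι_pS f (s : Set α) a (by simpa using ha)]
  · intro h α f g
    classical
    obtain ⟨s, hs⟩ := h α f g
    refine ⟨s, g ≫ Sigma.desc (fun a => if h : a ∈ s then
      Sigma.ι (fun i : {a : α // a ∈ s} => f i.1) ⟨a, h⟩ else 0), ?_⟩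
    rw [Category.assoc]
    conv_lhs => rw [← hs]
    congr 1
    apply Sigma.hom_ext
    intro a
    by_cases ha : a ∈ s
    · rw [ι_pS f _ a (by simpa using ha)]; simp [ha]
    · rw [ι_pS' f _ a (by simpa using ha)]; simp [ha]

lemma compact_zero {X : C} (h : IsZero X) : X ∈ compacts C := by
  rw [compact_iff]
  intro α f g
  exact ⟨∅, h.eq_of_src _ _⟩

lemma compact_retract {X Y : C} (i : X ⟶ Y) (r : Y ⟶ X) (h : i ≫ r = 𝟙 X)
    (hY : Y ∈ compacts C) : X ∈ compacts C := by
  rw [compact_iff] at *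
  intro α f g
  obtain ⟨s, hs⟩ := hY α f (r ≫ g)
  refine ⟨s, ?_⟩
  have := congrArg (fun z => i ≫ z) hs
  simpa [← Category.assoc, h] using this

lemma compact_coprod {ι : Type v} [Finite ι] (x : ι → C) (h : ∀ i, x i ∈ compacts C) {X : C}
    (e : X ≅ ∐ x) : X ∈ compacts C := by
  refine compact_retract e.hom e.inv e.hom_inv_id ?_
  simp only [compact_iff] at *
  intro α f g
  classical
  have := Fintype.ofFinite ι
  choose s hs using fun i => h i α f (Sigma.ι x i ≫ g)
  refine ⟨Finset.univ.biUnion s, ?_⟩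
  apply Sigma.hom_ext
  intro i
  rw [← Category.assoc]
  refine pS_mono f ?_ _ (hs i)
  intro a ha
  simp only [Finset.coe_biUnion, Set.mem_iUnion]
  exact ⟨i, by simp, ha⟩

lemma yex2 {X Y Z t : C} {u : X ⟶ Y} {v : Y ⟶ Z} {w : Z ⟶ X⟦(1 : ℤ)⟧}
    (hT : Triangle.mk u v w ∈ distTriang C) (f : Y ⟶ t) (hf : u ≫ f = 0) :
    ∃ g : Z ⟶ t, f = v ≫ g := Triangle.yoneda_exact₂ _ hT f hf

lemma yex3 {X Y Z t : C} {u : X ⟶ Y} {v : Y ⟶ Z} {w : Z ⟶ X⟦(1 : ℤ)⟧}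
    (hT : Triangle.mk u v w ∈ distTriang C) (f : Z ⟶ t) (hf : v ≫ f = 0) :
    ∃ g : X⟦(1 : ℤ)⟧ ⟶ t, f = w ≫ g := Triangle.yoneda_exact₃ _ hT f hf

lemma yex4 {X Y Z t : C} {u : X ⟶ Y} {v : Y ⟶ Z} {w : Z ⟶ X⟦(1 : ℤ)⟧}
    (hT : Triangle.mk u v w ∈ distTriang C) (f : X⟦(1 : ℤ)⟧ ⟶ t) (hf : w ≫ f = 0) :
    ∃ g : Y⟦(1 : ℤ)⟧ ⟶ t, f = u⟦(1 : ℤ)⟧' ≫ g := by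
  obtain ⟨g, hg⟩ := Triangle.yoneda_exact₃ _ (rot_of_distTriang _ hT) f hf
  exact ⟨-g, hg.trans ((Preadditive.neg_comp _ _).trans (Preadditive.comp_neg _ _).symm)⟩

lemma yex5 {X Y Z t : C} {u : X ⟶ Y} {v : Y ⟶ Z} {w : Z ⟶ X⟦(1 : ℤ)⟧}
    (hT : Triangle.mk u v w ∈ distTriang C) (f : Y⟦(1 : ℤ)⟧ ⟶ t) (hf : u⟦(1 : ℤ)⟧' ≫ f = 0) :
    ∃ g : Z⟦(1 : ℤ)⟧ ⟶ t, f = v⟦(1 : ℤ)⟧' ≫ g := by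
  obtain ⟨g, hg⟩ := Triangle.yoneda_exact₃ _ (rot_of_distTriang _ (rot_of_distTriang _ hT)) f
    ((Preadditive.neg_comp _ _).trans (neg_eq_zero.2 hf))
  exact ⟨-g, hg.trans ((Preadditive.neg_comp _ _).trans (Preadditive.comp_neg _ _).symm)⟩

lemma yex6 {X Y Z t : C} {u : X ⟶ Y} {v : Y ⟶ Z} {w : Z ⟶ X⟦(1 : ℤ)⟧}
    (hT : Triangle.mk u v w ∈ distTriang C) (f : Z⟦(1 : ℤ)⟧ ⟶ t) (hf : v⟦(1 : ℤ)⟧' ≫ f = 0) :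
    ∃ g : X⟦(1 : ℤ)⟧⟦(1 : ℤ)⟧ ⟶ t, f = w⟦(1 : ℤ)⟧' ≫ g := by
  obtain ⟨g, hg⟩ := Triangle.yoneda_exact₃ _
    (rot_of_distTriang _ (rot_of_distTriang _ (rot_of_distTriang _ hT))) f
    ((Preadditive.neg_comp _ _).trans (neg_eq_zero.2 hf))
  exact ⟨-g, hg.trans ((Preadditive.neg_comp _ _).trans (Preadditive.comp_neg _ _).symm)⟩

lemma tz12 {X Y Z : C} {u : X ⟶ Y} {v : Y ⟶ Z} {w : Z ⟶ X⟦(1 : ℤ)⟧}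
    (hT : Triangle.mk u v w ∈ distTriang C) : u ≫ v = 0 := comp_distTriang_mor_zero₁₂ _ hT

lemma tz23 {X Y Z : C} {u : X ⟶ Y} {v : Y ⟶ Z} {w : Z ⟶ X⟦(1 : ℤ)⟧}
    (hT : Triangle.mk u v w ∈ distTriang C) : v ≫ w = 0 := comp_distTriang_mor_zero₂₃ _ hT

lemma tz31 {X Y Z : C} {u : X ⟶ Y} {v : Y ⟶ Z} {w : Z ⟶ X⟦(1 : ℤ)⟧}
    (hT : Triangle.mk u v w ∈ distTriang C) : w ≫ u⟦(1 : ℤ)⟧' = 0 :=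
  comp_distTriang_mor_zero₃₁ _ hT

lemma cex1 {X Y Z t : C} {u : X ⟶ Y} {v : Y ⟶ Z} {w : Z ⟶ X⟦(1 : ℤ)⟧}
    (hT : Triangle.mk u v w ∈ distTriang C) (f : t ⟶ X⟦(1 : ℤ)⟧) (hf : f ≫ u⟦(1 : ℤ)⟧' = 0) :
    ∃ g : t ⟶ Z, f = g ≫ w := Triangle.coyoneda_exact₁ _ hT f hf

lemma cex2 {X Y Z t : C} {u : X ⟶ Y} {v : Y ⟶ Z} {w : Z ⟶ X⟦(1 : ℤ)⟧}
    (hT : Triangle.mk u v w ∈ distTriang C) (f : t ⟶ Y) (hf : f ≫ v = 0) :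
    ∃ g : t ⟶ X, f = g ≫ u := Triangle.coyoneda_exact₂ _ hT f hf

lemma cex3 {X Y Z t : C} {u : X ⟶ Y} {v : Y ⟶ Z} {w : Z ⟶ X⟦(1 : ℤ)⟧}
    (hT : Triangle.mk u v w ∈ distTriang C) (f : t ⟶ Z) (hf : f ≫ w = 0) :
    ∃ g : t ⟶ Y, f = g ≫ v := Triangle.coyoneda_exact₃ _ hT f hf

lemma tr3 {X Y Z X' Y' Z' : C} {u : X ⟶ Y} {v : Y ⟶ Z} {w : Z ⟶ X⟦(1 : ℤ)⟧}
    (hT : Triangle.mk u v w ∈ distTriang C)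
    {u' : X' ⟶ Y'} {v' : Y' ⟶ Z'} {w' : Z' ⟶ X'⟦(1 : ℤ)⟧}
    (hT' : Triangle.mk u' v' w' ∈ distTriang C) (a : X ⟶ X') (b : Y ⟶ Y')
    (h : u ≫ b = a ≫ u') : ∃ c : Z ⟶ Z', v ≫ c = b ≫ v' ∧ w ≫ a⟦(1 : ℤ)⟧' = c ≫ w' :=
  complete_distinguished_triangle_morphism _ _ hT hT' a b h

lemma tr3' {X Y Z X' Y' Z' : C} {u : X ⟶ Y} {v : Y ⟶ Z} {w : Z ⟶ X⟦(1 : ℤ)⟧}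
    (hT : Triangle.mk u v w ∈ distTriang C)
    {u' : X' ⟶ Y'} {v' : Y' ⟶ Z'} {w' : Z' ⟶ X'⟦(1 : ℤ)⟧}
    (hT' : Triangle.mk u' v' w' ∈ distTriang C) (a : X ⟶ X') (c : Z ⟶ Z')
    (h : w ≫ a⟦(1 : ℤ)⟧' = c ≫ w') : ∃ b : Y ⟶ Y', u ≫ b = a ≫ u' ∧ v ≫ c = b ≫ v' :=
  complete_distinguished_triangle_morphism₂ _ _ hT hT' a c h

lemma compact_ext {X Y Z : C} (u : X ⟶ Y) (v : Y ⟶ Z) (w : Z ⟶ X⟦(1 : ℤ)⟧)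
    (hT : Triangle.mk u v w ∈ distTriang C) (hX : X ∈ compacts C) (hZ : Z ∈ compacts C) :
    Y ∈ compacts C := by
  rw [compact_iff] at *
  intro α f g
  classical
  obtain ⟨s, hs⟩ := hX α f (u ≫ g)
  obtain ⟨k, hk⟩ := yex2 hT (g - g ≫ pS f s) (by
    rw [Category.assoc] at hs
    rw [Preadditive.comp_sub, hs, sub_self])
  obtain ⟨s', hs'⟩ := hZ α f k
  have h1 : (g - g ≫ pS f s) ≫ pS f ((s ∪ s' : Finset α) : Set α) = (g - g ≫ pS f s) := by
    refine pS_mono f (s := s') (by simp) _ ?_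
    rw [hk, Category.assoc, hs']
  have h2 : (g ≫ pS f s) ≫ pS f ((s ∪ s' : Finset α) : Set α) = (g ≫ pS f s) := by
    rw [Category.assoc, pS_comp f _ _ (by simp)]
  refine ⟨s ∪ s', ?_⟩
  have := congrArg₂ (· + ·) h1 h2
  simpa [← Preadditive.add_comp] using this

lemma compact_shift (n : ℤ) {X : C} (hX : X ∈ compacts C) : X⟦n⟧ ∈ compacts C := by
  rw [compact_iff] at *
  intro α f g
  let adj := (shiftEquiv C n).toAdjunction
  let I := PreservesCoproduct.iso (shiftFunctor C (-n)) f
  let g' : X ⟶ (∐ f)⟦-n⟧ := adj.homEquiv X (∐ f) g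
  obtain ⟨s, hs⟩ := hX α _ (g' ≫ I.hom)
  refine ⟨s, ?_⟩
  have key : I.inv ≫ (shiftFunctor C (-n)).map (pS f s) = pS _ (s : Set α) ≫ I.inv := by
    apply Sigma.hom_ext
    intro a
    have e1 : Sigma.ι (fun j => (shiftFunctor C (-n)).obj (f j)) a ≫ I.inv
        = (shiftFunctor C (-n)).map (Sigma.ι f a) := by
      rw [PreservesCoproduct.inv_hom, ι_comp_sigmaComparison]
    rw [← Category.assoc, e1, ← Functor.map_comp, ← Category.assoc]
    by_cases ha : a ∈ (s : Set α)
    · rw [ι_pS _ _ _ ha, ι_pS _ _ _ ha, e1]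
    · rw [ι_pS' _ _ _ ha, ι_pS' _ _ _ ha, zero_comp, Functor.map_zero]
  apply (adj.homEquiv X (∐ f)).injective
  refine (adj.homEquiv_naturality_right g (pS f s)).trans ?_
  change g' ≫ (shiftFunctor C (-n)).map (pS f s) = g'
  rw [← cancel_mono I.hom]
  conv_rhs => rw [← hs]
  have : (shiftFunctor C (-n)).map (pS f s) = I.hom ≫ pS _ (s : Set α) ≫ I.inv := by
    rw [← key, Iso.hom_inv_id_assoc]
  simp [this]

/-- Hom-theoretic expression of the fact that the cone of `φ` is in the metric ball. -/
def Good (S : Set C) {E F : C} (φ : E ⟶ F) : Prop :=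
  ∀ t ∈ rOrth C S, (∀ a : F ⟶ t, φ ≫ a = 0 → a = 0) ∧
    ∀ b : E⟦(1 : ℤ)⟧ ⟶ t, ∃ c : F⟦(1 : ℤ)⟧ ⟶ t, b = φ⟦(1 : ℤ)⟧' ≫ c

lemma good_of_mem {S : Set C} {E F D : C} {φ : E ⟶ F} {g : F ⟶ D} {hh : D ⟶ E⟦(1 : ℤ)⟧}
    (hT : Triangle.mk φ g hh ∈ distTriang C) (hD : D ∈ S) : Good S φ := by
  intro t ht
  constructor
  · intro a ha
    obtain ⟨c, rfl⟩ := yex2 hT a ha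
    rw [ht _ hD c, comp_zero]
  · intro b
    exact yex4 hT b (ht _ hD _)

lemma mem_of_good {S : Set C} (hS : lOrth C (rOrth C S) = S)
    {E F D : C} {φ : E ⟶ F} {g : F ⟶ D} {hh : D ⟶ E⟦(1 : ℤ)⟧}
    (hT : Triangle.mk φ g hh ∈ distTriang C) (hφ : Good S φ) : D ∈ S := by
  rw [← hS]
  intro t ht f
  have h1 : g ≫ f = 0 := (hφ t ht).1 _ (by rw [← Category.assoc, tz12 hT, zero_comp])
  obtain ⟨k, rfl⟩ := yex3 hT f h1
  obtain ⟨c, rfl⟩ := (hφ t ht).2 k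
  rw [← Category.assoc, tz31 hT, zero_comp]

lemma good_comp {S : Set C} {X Y Z : C} {f : X ⟶ Y} {g : Y ⟶ Z} (hf : Good S f) (hg : Good S g) :
    Good S (f ≫ g) := by
  intro t ht
  constructor
  · intro a ha
    exact (hg t ht).1 _ ((hf t ht).1 _ (by simpa using ha))
  · intro b
    obtain ⟨c, rfl⟩ := (hf t ht).2 b
    obtain ⟨d, rfl⟩ := (hg t ht).2 c
    exact ⟨d, by simp⟩

lemma good_ext {S : Set C} {E F D E' Y : C} {φ : E ⟶ F} {g : F ⟶ D} {hh : D ⟶ E⟦(1 : ℤ)⟧}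
    (hT : Triangle.mk φ g hh ∈ distTriang C) {ψ : E' ⟶ D} (hψ : Good S ψ)
    {f : E ⟶ Y} {g' : Y ⟶ E'} (hY : Triangle.mk f g' (ψ ≫ hh) ∈ distTriang C)
    {b : Y ⟶ F} (h1 : f ≫ b = φ) (h2 : g' ≫ ψ = b ≫ g) : Good S b := by
  intro t ht
  obtain ⟨inj, sur⟩ := hψ t ht
  constructor
  · intro a ha
    obtain ⟨a', rfl⟩ := yex2 hT a (by rw [← h1, Category.assoc, ha, comp_zero])
    obtain ⟨x, hx⟩ := yex3 hY (ψ ≫ a') (by rw [← Category.assoc, h2, Category.assoc, ha])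
    have : a' - hh ≫ x = 0 := inj _ (by rw [Preadditive.comp_sub, hx]; simp)
    rw [sub_eq_zero.1 this, ← Category.assoc, tz23 hT, zero_comp]
  · intro y
    have e1 : hh ≫ f⟦(1 : ℤ)⟧' ≫ y = 0 := inj _ (by
      have := tz31 hY
      rw [Category.assoc] at this
      rw [← Category.assoc hh, ← Category.assoc ψ, this, zero_comp])
    obtain ⟨z, hz⟩ := yex4 hT _ e1
    obtain ⟨w, hw⟩ := yex5 hY (y - b⟦(1 : ℤ)⟧' ≫ z) (by
      rw [Preadditive.comp_sub, hz, ← Category.assoc, ← Functor.map_comp, h1, sub_self])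
    obtain ⟨w', rfl⟩ := sur w
    refine ⟨z + g⟦(1 : ℤ)⟧' ≫ w', ?_⟩
    rw [← Category.assoc, ← Functor.map_comp, h2, Functor.map_comp, Category.assoc] at hw
    rw [Preadditive.comp_add, ← hw]
    abel

lemma good_cone {S : Set C} {E F D K K' : C} {φ : E ⟶ F} {g : F ⟶ D} {hh : D ⟶ E⟦(1 : ℤ)⟧}
    (hT : Triangle.mk φ g hh ∈ distTriang C) {κ : K ⟶ F} (hκ : Good S κ)
    {u : E ⟶ K} {v : K ⟶ K'} {w : K' ⟶ E⟦(1 : ℤ)⟧} (hK : Triangle.mk u v w ∈ distTriang C)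
    (huκ : u ≫ κ = φ) {c : K' ⟶ D} (h1 : v ≫ c = κ ≫ g) (h2 : w = c ≫ hh) : Good S c := by
  intro t ht
  obtain ⟨inj, sur⟩ := hκ t ht
  constructor
  · intro a ha
    obtain ⟨x, rfl⟩ := yex3 hT a (inj _ (by
      rw [← Category.assoc, ← h1, Category.assoc, ha, comp_zero]))
    obtain ⟨y, rfl⟩ := yex4 hK x (by rw [h2, Category.assoc, ha])
    obtain ⟨z, rfl⟩ := sur y
    rw [← Category.assoc (u⟦(1 : ℤ)⟧'), ← Functor.map_comp, huκ, ← Category.assoc, tz31 hT,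
      zero_comp]
  · intro b
    obtain ⟨z, hz⟩ := sur (v⟦(1 : ℤ)⟧' ≫ b)
    obtain ⟨y, rfl⟩ := yex5 hT z (by
      rw [← huκ, Functor.map_comp, Category.assoc, ← hz, ← Category.assoc, ← Functor.map_comp,
        tz12 hK, Functor.map_zero, zero_comp])
    obtain ⟨q, hq⟩ := yex6 hK (b - c⟦(1 : ℤ)⟧' ≫ y) (by
      rw [Preadditive.comp_sub, hz, ← Category.assoc, ← Category.assoc, ← Functor.map_comp,
        ← Functor.map_comp, h1, sub_self])
    refine ⟨y + hh⟦(1 : ℤ)⟧' ≫ q, ?_⟩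
    rw [h2, Functor.map_comp, Category.assoc] at hq
    rw [Preadditive.comp_add, ← hq]
    abel

lemma rm_mono {Rm : ℤ → Set C} (hR : IsExtGoodMetric C Rm) {m n : ℤ} (h : m ≤ n) :
    Rm n ⊆ Rm m := by
  obtain ⟨k, rfl⟩ := Int.le.dest h
  induction k with
  | zero => simp
  | succ k ih =>
    intro x hx
    refine ih (by omega) (hR.antitone _ ?_)
    convert hx using 2
    push_cast; ring

lemma homz_ext {X Y Z t : C} (u : X ⟶ Y) (v : Y ⟶ Z) (w : Z ⟶ X⟦(1 : ℤ)⟧)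
    (hT : Triangle.mk u v w ∈ distTriang C) (hX : ∀ f : X ⟶ t, f = 0) (hZ : ∀ f : Z ⟶ t, f = 0)
    (f : Y ⟶ t) : f = 0 := by
  obtain ⟨g, rfl⟩ := yex2 hT f (hX _)
  rw [hZ g, comp_zero]

lemma compact_vanish {G Rm : ℤ → Set C} {A : ℤ} (hG : IsGenSeq C G) (h : IsGPreApprox C G Rm A)
    {K : C} (hK : K ∈ compacts C) :
    ∃ N : ℤ, ∀ m, N ≤ m → ∀ b ∈ Rm m, ∀ f : K ⟶ b, f = 0 := by
  rw [← hG.generates] at hK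
  obtain ⟨Y, hY, i, r, hir⟩ := hK
  have key : ∃ N : ℤ, ∀ m, N ≤ m → ∀ b ∈ Rm m, ∀ f : Y ⟶ b, f = 0 := by
    clear hir i r
    change extClosure C _ Y at hY
    induction hY with
    | of hX =>
      obtain ⟨n, hn⟩ := Set.mem_iUnion.1 hX
      obtain ⟨N, hN⟩ := h.cond2 n
      exact ⟨N, fun m hm b hb f => hN m hm _ hn b hb f⟩
    | zero hX => exact ⟨0, fun m _ b _ f => hX.eq_of_src _ _⟩
    | ext u v w hT _ _ h1 h2 =>
      obtain ⟨N1, h1⟩ := h1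
      obtain ⟨N2, h2⟩ := h2
      refine ⟨max N1 N2, fun m hm b hb f => homz_ext u v w hT (h1 m (by omega) b hb)
        (h2 m (by omega) b hb) f⟩
  obtain ⟨N, hN⟩ := key
  refine ⟨N, fun m hm b hb f => ?_⟩
  rw [← Category.id_comp f, ← hir, Category.assoc, hN m hm b hb (r ≫ f), comp_zero]

/-- First approximation. -/
lemma approx_one {Rm S : ℤ → Set C} (hR : IsOrthMetric C Rm)
    (hap : ∀ i : ℤ, ∀ K ∈ compacts C ∩ Rm i, approxTriangle C K (S i) (Rm (i + 1)))
    (i : ℤ) {F : C} (hF : F ∈ closCompacts C Rm) (hFi : F ∈ Rm i) :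
    ∃ (E : C) (φ : E ⟶ F), E ∈ S i ∧ Good (Rm (i + 1)) φ := by
  obtain ⟨K, D, κ, g, w, hT, hK, hD⟩ := Set.mem_iInter.1 hF (i + 1)
  have hKi : K ∈ Rm i := by
    refine hR.star_subset i ⟨_, _, _, _, _, inv_rot_of_distTriang _ hT, ?_, hFi⟩
    exact hR.shift_neg_one i ⟨D, hD, ⟨Iso.refl _⟩⟩
  obtain ⟨E, D', f, g', w', hT', hE, hD'⟩ := hap i K ⟨hK, hKi⟩
  exact ⟨E, f ≫ κ, hE, good_comp (good_of_mem hT' hD') (good_of_mem hT hD)⟩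

lemma cone_clos {G Rm : ℤ → Set C} {A : ℤ} (hG : IsGenSeq C G) (h : IsGPreApprox C G Rm A)
    {E F D : C} (hE : E ∈ compacts C) (hF : F ∈ closCompacts C Rm)
    {φ : E ⟶ F} {g : F ⟶ D} {hh : D ⟶ E⟦(1 : ℤ)⟧}
    (hT : Triangle.mk φ g hh ∈ distTriang C) : D ∈ closCompacts C Rm := by
  refine Set.mem_iInter.2 fun m => ?_
  obtain ⟨N, hN⟩ := compact_vanish hG h hE
  obtain ⟨K, D', κ, g', w', hT', hK, hD'⟩ := Set.mem_iInter.1 hF (max m N)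
  obtain ⟨u, hu⟩ := cex2 hT' φ (hN _ (le_max_right _ _) _ hD' _)
  obtain ⟨K', v, w, hK'⟩ := distinguished_cocone_triangle u
  obtain ⟨c, hc1, hc2⟩ := tr3 hK' hT (𝟙 E) κ (by rw [← hu, Category.id_comp])
  have good : Good (Rm m) c := by
    refine good_cone hT (good_of_mem hT' (rm_mono h.orthMetric.toIsExtGoodMetric
      (le_max_left _ _) hD')) hK' hu.symm hc1 ?_
    simpa using hc2
  obtain ⟨Q, p, q, hQ⟩ := distinguished_cocone_triangle c
  refine ⟨K', Q, c, p, q, hQ, ?_, mem_of_good (h.orthMetric.orth m) hQ good⟩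
  exact compact_ext _ _ _ (rot_of_distTriang _ hK') hK (compact_shift 1 hE)

lemma seq_exists {G Rm S : ℤ → Set C} {W : ℕ → Set C} {A : ℤ}
    (hG : IsGenSeq C G) (h : IsGPreApprox C G Rm A)
    (hap : ∀ i : ℤ, ∀ K ∈ compacts C ∩ Rm i, approxTriangle C K (S i) (Rm (i + 1)))
    (i : ℤ) {F : C} (hF : F ∈ closCompacts C Rm) (hFi : F ∈ Rm i)
    (hW : ∀ n, W n ⊆ compacts C) (hW0 : S i ⊆ W 0)
    (hWs : ∀ n : ℕ, starSet C (W n) (S (i + n + 1)) ⊆ W (n + 1)) :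
    ∃ (E : ℕ → C) (e : ∀ n, E n ⟶ E (n + 1)) (φ : ∀ n, E n ⟶ F),
        (∀ n, e n ≫ φ (n + 1) = φ n) ∧ (∀ n : ℕ, E n ∈ W n) ∧
        ∀ n : ℕ, Good (Rm (i + n + 1)) (φ n) := by
  let St : ℕ → Type _ := fun n => {p : Σ E : C, (E ⟶ F) // p.1 ∈ W n ∧ Good (Rm (i + n + 1)) p.2}
  have step : ∀ (n : ℕ) (x : St n), ∃ (y : St (n + 1)) (e : x.1.1 ⟶ y.1.1),
      e ≫ y.1.2 = x.1.2 := by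
    rintro n ⟨⟨E, φ⟩, hE, hφ⟩
    dsimp only at hE hφ
    obtain ⟨D, g, hh, hT⟩ := distinguished_cocone_triangle φ
    have hD := mem_of_good (h.orthMetric.orth _) hT hφ
    obtain ⟨E', ψ, hE', hψ⟩ := approx_one h.orthMetric hap (i + n + 1)
      (cone_clos hG h (hW n hE) hF hT) hD
    obtain ⟨Y, f, g', hY⟩ := distinguished_cocone_triangle₂ (ψ ≫ hh)
    obtain ⟨b, hb1, hb2⟩ := tr3' hY hT (𝟙 E) ψ (by simp)
    rw [Category.id_comp] at hb1
    refine ⟨⟨⟨Y, b⟩, hWs n ⟨E, E', f, g', _, hY, hE, hE'⟩, ?_⟩, f, hb1⟩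
    have := good_ext hT hψ hY hb1 hb2
    convert this using 2
    push_cast; ring
  obtain ⟨E0, φ0, hE0, hφ0⟩ := approx_one h.orthMetric hap i hF hFi
  let x0 : St 0 := ⟨⟨E0, φ0⟩, hW0 hE0, by simpa using hφ0⟩
  choose nx e he using step
  let x : ∀ n, St n := fun n => Nat.rec x0 (fun n y => nx n y) n
  exact ⟨fun n => (x n).1.1, fun n => e n (x n), fun n => (x n).1.2, fun n => he n (x n),
    fun n => (x n).2.1, fun n => (x n).2.2⟩

open Classical in
/-- Projection of a coproduct on a summand. -/
noncomputable def prC {α : Type v} (f : α → C) (a : α) : ∐ f ⟶ f a :=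
  Sigma.desc (fun b => if h : b = a then eqToHom (by rw [h]) else 0)

lemma ι_prC {α : Type v} (f : α → C) (a : α) : Sigma.ι f a ≫ prC f a = 𝟙 _ := by
  simp [prC]

lemma ι_prC_ne {α : Type v} (f : α → C) (a b : α) (h : b ≠ a) : Sigma.ι f b ≫ prC f a = 0 := by
  simp [prC, h]

lemma pS_sum {α : Type v} (f : α → C) (s : Finset α) :
    pS f (s : Set α) = ∑ a ∈ s, prC f a ≫ Sigma.ι f a := by
  apply Sigma.hom_ext
  intro b
  rw [Preadditive.comp_sum]
  by_cases hb : b ∈ s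
  · rw [ι_pS _ _ _ (by simpa using hb), Finset.sum_eq_single b]
    · rw [← Category.assoc, ι_prC, Category.id_comp]
    · intro a _ hab
      rw [← Category.assoc, ι_prC_ne _ _ _ hab.symm, zero_comp]
    · intro h; exact absurd hb h
  · rw [ι_pS' _ _ _ (by simpa using hb), Finset.sum_eq_zero]
    intro a ha
    rw [← Category.assoc, ι_prC_ne, zero_comp]
    rintro rfl
    exact hb ha

/-- Projection for sequences. -/
noncomputable def seqPr (E : ℕ → C) (n : ℕ) : seqCoprod C E ⟶ E n :=
  prC (fun n : ULift.{v} ℕ => E n.down) (ULift.up n)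

lemma seqInj_pr (E : ℕ → C) (n : ℕ) : seqInj C E n ≫ seqPr E n = 𝟙 _ :=
  ι_prC (fun n : ULift.{v} ℕ => E n.down) (ULift.up n)

lemma seqInj_pr_ne (E : ℕ → C) (n m : ℕ) (h : m ≠ n) : seqInj C E m ≫ seqPr E n = 0 :=
  ι_prC_ne (fun n : ULift.{v} ℕ => E n.down) (ULift.up n) (ULift.up m) (by
    intro h'; exact h (congrArg ULift.down h'))

lemma seq_hom_ext (E : ℕ → C) {X : C} (f g : seqCoprod C E ⟶ X)
    (h : ∀ n, seqInj C E n ≫ f = seqInj C E n ≫ g) : f = g :=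
  Sigma.hom_ext _ _ (fun a => h a.down)

lemma seqInj_oms (E : ℕ → C) (e : ∀ n, E n ⟶ E (n + 1)) (n : ℕ) :
    seqInj C E n ≫ oneMinusShift C E e = seqInj C E n - e n ≫ seqInj C E (n + 1) :=
  Sigma.ι_desc (f := fun n : ULift.{v} ℕ => E n.down)
    (fun n => seqInj C E n.down - e n.down ≫ seqInj C E (n.down + 1)) (ULift.up n)

lemma oms_pr_zero (E : ℕ → C) (e : ∀ n, E n ⟶ E (n + 1)) :
    oneMinusShift C E e ≫ seqPr E 0 = seqPr E 0 := by
  apply seq_hom_ext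
  intro n
  rw [← Category.assoc, seqInj_oms, Preadditive.sub_comp, Category.assoc,
    seqInj_pr_ne E 0 (n + 1) (by omega), comp_zero, sub_zero]

lemma oms_pr_succ (E : ℕ → C) (e : ∀ n, E n ⟶ E (n + 1)) (m : ℕ) :
    oneMinusShift C E e ≫ seqPr E (m + 1) = seqPr E (m + 1) - seqPr E m ≫ e m := by
  apply seq_hom_ext
  intro n
  rw [← Category.assoc, seqInj_oms, Preadditive.sub_comp, Preadditive.comp_sub, Category.assoc,
    ← Category.assoc _ _ (e m)]
  congr 1
  by_cases h : n = m
  · subst h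
    rw [seqInj_pr, seqInj_pr, Category.comp_id, Category.id_comp]
  · rw [seqInj_pr_ne E m n h, seqInj_pr_ne E (m + 1) (n + 1) (by omega), comp_zero, zero_comp]

/-- Truncation of a countable coproduct. -/
noncomputable def seqP (E : ℕ → C) (s : Finset (ULift.{v} ℕ)) : seqCoprod C E ⟶ seqCoprod C E :=
  pS (fun n : ULift.{v} ℕ => E n.down) (s : Set _)

lemma compact_seq (E : ℕ → C) {K : C} (hK : K ∈ compacts C) (x : K ⟶ seqCoprod C E) :
    ∃ s, x ≫ seqP E s = x :=
  (compact_iff K).1 hK _ (fun n : ULift.{v} ℕ => E n.down) x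

lemma seqP_sum (E : ℕ → C) (s : Finset (ULift.{v} ℕ)) :
    seqP E s = ∑ a ∈ s, seqPr E a.down ≫ seqInj C E a.down :=
  pS_sum (fun n : ULift.{v} ℕ => E n.down) s

lemma seqInj_seqP (E : ℕ → C) (s : Finset (ULift.{v} ℕ)) (n : ℕ) (h : ULift.up n ∈ s) :
    seqInj C E n ≫ seqP E s = seqInj C E n :=
  ι_pS (fun n : ULift.{v} ℕ => E n.down) (s : Set (ULift.{v} ℕ)) (ULift.up n) (Finset.mem_coe.2 h)

lemma seqInj_seqP' (E : ℕ → C) (s : Finset (ULift.{v} ℕ)) (n : ℕ) (h : ULift.up n ∉ s) :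
    seqInj C E n ≫ seqP E s = 0 :=
  ι_pS' (fun n : ULift.{v} ℕ => E n.down) (s : Set (ULift.{v} ℕ)) (ULift.up n) (fun h' => h (Finset.mem_coe.1 h'))

lemma oms_inj (E : ℕ → C) (e : ∀ n, E n ⟶ E (n + 1)) {K : C} (hK : K ∈ compacts C)
    (x : K ⟶ seqCoprod C E) (hx : x ≫ oneMinusShift C E e = 0) : x = 0 := by
  have hz : ∀ n, x ≫ seqPr E n = 0 := by
    intro n
    induction n with
    | zero => rw [← oms_pr_zero E e, ← Category.assoc, hx, zero_comp]
    | succ n ih =>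
      have := oms_pr_succ E e n
      have h2 := congrArg (fun z => x ≫ z) this
      simp only [Preadditive.comp_sub] at h2
      rw [← Category.assoc, hx, zero_comp, ← Category.assoc, ih, zero_comp, sub_zero] at h2
      exact h2.symm
  obtain ⟨s, hs⟩ := compact_seq E hK x
  rw [seqP_sum, Preadditive.comp_sum, Finset.sum_eq_zero] at hs
  · exact hs.symm
  · intro a _
    have := hz a.down
    rw [← Category.assoc, this, zero_comp]

lemma hocolim_lift (E : ℕ → C) (e : ∀ n, E n ⟶ E (n + 1)) {K H : C} (hK : K ∈ compacts C)
    (π : seqCoprod C E ⟶ H) (hπ : oneMinusShift C E e ≫ π = 0) (b : K ⟶ seqCoprod C E) (N0 : ℕ) :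
    ∃ N, N0 ≤ N ∧ ∃ c : K ⟶ E N, b ≫ π = c ≫ seqInj C E N ≫ π := by
  have h1 : ∀ n, seqInj C E n ≫ π = e n ≫ seqInj C E (n + 1) ≫ π := by
    intro n
    have := congrArg (fun z => seqInj C E n ≫ z) hπ
    simp only [comp_zero] at this
    rw [← Category.assoc, seqInj_oms, Preadditive.sub_comp, sub_eq_zero, Category.assoc] at this
    exact this
  have h2 : ∀ n k, ∃ t : E n ⟶ E (n + k), seqInj C E n ≫ π = t ≫ seqInj C E (n + k) ≫ π := by
    intro n k
    induction k with
    | zero => exact ⟨𝟙 _, by simp⟩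
    | succ k ih =>
      obtain ⟨t, ht⟩ := ih
      exact ⟨t ≫ e (n + k), by rw [ht, h1 (n + k), Category.assoc]; rfl⟩
  have h3 : ∀ n N, n ≤ N → ∃ t : E n ⟶ E N, seqInj C E n ≫ π = t ≫ seqInj C E N ≫ π := by
    intro n N h
    obtain ⟨k, rfl⟩ := Nat.exists_eq_add_of_le h
    exact h2 n k
  choose t ht using h3
  obtain ⟨s, hs⟩ := compact_seq E hK b
  let N := max N0 (s.sup ULift.down)
  let q : seqCoprod C E ⟶ E N :=
    Sigma.desc (fun a : ULift.{v} ℕ => if h : a.down ≤ N then t a.down N h else 0)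
  refine ⟨N, le_max_left _ _, b ≫ q, ?_⟩
  have hq : ∀ n (hn : n ≤ N), seqInj C E n ≫ q = t n N hn := by
    intro n hn
    refine (Sigma.ι_desc (f := fun n : ULift.{v} ℕ => E n.down) _ (ULift.up n)).trans ?_
    exact dif_pos hn
  have key : seqP E s ≫ π = seqP E s ≫ q ≫ seqInj C E N ≫ π := by
    apply seq_hom_ext
    intro a
    rw [← Category.assoc, ← Category.assoc]
    by_cases ha : ULift.up a ∈ s
    · have hle : a ≤ N := le_trans (Finset.le_sup (f := ULift.down) ha) (le_max_right _ _)
      rw [seqInj_seqP _ _ _ ha, ← Category.assoc _ q, hq _ hle]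
      exact ht _ _ _
    · rw [seqInj_seqP' _ _ _ ha, zero_comp, zero_comp]
  calc b ≫ π = (b ≫ seqP E s) ≫ π := by rw [hs]
    _ = (b ≫ seqP E s) ≫ q ≫ seqInj C E N ≫ π := by
      rw [Category.assoc, key, Category.assoc]
    _ = b ≫ q ≫ seqInj C E N ≫ π := by rw [hs]
    _ = _ := by rw [Category.assoc]

lemma shift_comp_zero {K X Y : C} (x : K ⟶ X⟦(1 : ℤ)⟧) (f : X ⟶ Y) (hx : x ≫ f⟦(1 : ℤ)⟧' = 0)
    (hf : ∀ y : K⟦(-1 : ℤ)⟧ ⟶ X, y ≫ f = 0 → y = 0) : x = 0 := by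
  let c : K⟦(-1 : ℤ)⟧⟦(1 : ℤ)⟧ ≅ K := shiftNegShift K 1
  obtain ⟨y, hy⟩ := (shiftFunctor C (1 : ℤ)).map_surjective (c.hom ≫ x)
  have : y = 0 := by
    apply hf
    apply (shiftFunctor C (1 : ℤ)).map_injective
    rw [Functor.map_comp, hy, Category.assoc, hx, comp_zero, Functor.map_zero]
  rw [this, Functor.map_zero] at hy
  rw [← cancel_epi c.hom, ← hy, comp_zero]

lemma hocolim_iso {G Rm : ℤ → Set C} {A : ℤ} (hcg : CompactlyGenerated C) (hG : IsGenSeq C G)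
    (h : IsGPreApprox C G Rm A) (i : ℤ) {F : C} (E : ℕ → C) (e : ∀ n, E n ⟶ E (n + 1))
    (φ : ∀ n, E n ⟶ F)
    (hD : ∀ n : ℕ, ∃ (D : C) (g : F ⟶ D) (hh : D ⟶ (E n)⟦(1 : ℤ)⟧),
          Triangle.mk (φ n) g hh ∈ (distTriang C) ∧ D ∈ Rm (i + (n : ℤ) + 1))
    (H : C) (π : seqCoprod C E ⟶ H) (δ : H ⟶ (seqCoprod C E)⟦(1 : ℤ)⟧)
    (hH : IsHocolim C E e H π δ) (h' : H ⟶ F) (hh' : ∀ n, seqInj C E n ≫ π ≫ h' = φ n) :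
    IsIso h' := by
  have inj : ∀ K ∈ compacts C, ∀ a : K ⟶ H, a ≫ h' = 0 → a = 0 := by
    intro K hK a ha
    have h0 : a ≫ δ = 0 := by
      refine shift_comp_zero _ (oneMinusShift C E e) ?_
        (fun y hy => oms_inj E e (compact_shift (-1) hK) y hy)
      rw [Category.assoc, tz31 hH, comp_zero]
    obtain ⟨b, rfl⟩ := cex3 hH a h0
    obtain ⟨N1, hN1⟩ := compact_vanish hG h hK
    obtain ⟨N, hN, c, hc⟩ := hocolim_lift E e hK π (tz12 hH) b (N1 - i).toNat
    have hcφ : c ≫ φ N = 0 := by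
      rw [← hh' N]
      rw [hc] at ha
      simpa using ha
    obtain ⟨D, g, hh, hT, hDm⟩ := hD N
    obtain ⟨d, hd⟩ := Triangle.coyoneda_exact₂ _ (inv_rot_of_distTriang _ hT) c hcφ
    have hd0 : d = 0 := by
      refine hN1 (i + N) (by omega) _ ?_ d
      exact h.orthMetric.shift_neg_one _ ⟨D, hDm, ⟨Iso.refl _⟩⟩
    have hc0 : c = 0 := hd.trans (by rw [hd0]; exact zero_comp)
    rw [hc, hc0, zero_comp]
  have sur : ∀ K ∈ compacts C, ∀ a : K ⟶ F, ∃ b : K ⟶ H, a = b ≫ h' := by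
    intro K hK a
    obtain ⟨N1, hN1⟩ := compact_vanish hG h hK
    obtain ⟨D, g, hh, hT, hDm⟩ := hD (N1 - i).toNat
    obtain ⟨b, rfl⟩ := cex2 hT a (hN1 _ (by omega) _ hDm _)
    refine ⟨b ≫ seqInj C E _ ≫ π, ?_⟩
    rw [← hh']
    simp
  obtain ⟨Q, p, q, hQ⟩ := distinguished_cocone_triangle h'
  have hz : IsZero Q := by
    apply hcg
    intro K hK f
    have h0 : f ≫ q = 0 := by
      refine shift_comp_zero _ h' ?_ (fun y hy => inj _ (compact_shift (-1) hK) y hy)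
      rw [Category.assoc, tz31 hQ, comp_zero]
    obtain ⟨a, rfl⟩ := cex3 hQ f h0
    obtain ⟨b, rfl⟩ := sur K hK a
    rw [Category.assoc, tz12 hQ, comp_zero]
  exact (Triangle.isZero₃_iff_isIso₁ _ hQ).1 hz

lemma main_generic {G Rm S : ℤ → Set C} {W : ℕ → Set C} {A : ℤ} (hcg : CompactlyGenerated C)
    (hG : IsGenSeq C G) (h : IsGPreApprox C G Rm A)
    (hap : ∀ i : ℤ, ∀ K ∈ compacts C ∩ Rm i, approxTriangle C K (S i) (Rm (i + 1)))
    (i : ℤ) {F : C} (hF : F ∈ closCompacts C Rm ∩ Rm i)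
    (hW : ∀ n, W n ⊆ compacts C) (hW0 : S i ⊆ W 0)
    (hWs : ∀ n : ℕ, starSet C (W n) (S (i + n + 1)) ⊆ W (n + 1)) :
    ∃ (E : ℕ → C) (e : ∀ n, E n ⟶ E (n + 1)) (φ : ∀ n, E n ⟶ F),
        (∀ n, e n ≫ φ (n + 1) = φ n) ∧
        (∀ n : ℕ, E n ∈ compacts C) ∧
        (∀ n : ℕ, E n ∈ W n) ∧
        (∀ n : ℕ, ∃ (D : C) (g : F ⟶ D) (hh : D ⟶ (E n)⟦(1 : ℤ)⟧),
          Triangle.mk (φ n) g hh ∈ (distTriang C) ∧ D ∈ Rm (i + (n : ℤ) + 1)) ∧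
        ∀ (H : C) (π : seqCoprod C E ⟶ H) (δ : H ⟶ (seqCoprod C E)⟦(1 : ℤ)⟧),
          IsHocolim C E e H π δ →
          ∀ h' : H ⟶ F, (∀ n, seqInj C E n ≫ π ≫ h' = φ n) → IsIso h' := by
  obtain ⟨E, e, φ, h1, h2, h3⟩ := seq_exists hG h hap i hF.1 hF.2 hW hW0 hWs
  have hD : ∀ n : ℕ, ∃ (D : C) (g : F ⟶ D) (hh : D ⟶ (E n)⟦(1 : ℤ)⟧),
          Triangle.mk (φ n) g hh ∈ (distTriang C) ∧ D ∈ Rm (i + (n : ℤ) + 1) := by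
    intro n
    obtain ⟨D, g, hh, hT⟩ := distinguished_cocone_triangle (φ n)
    exact ⟨D, g, hh, hT, mem_of_good (h.orthMetric.orth _) hT (h3 n)⟩
  exact ⟨E, e, φ, h1, fun n => hW n (h2 n), h2, hD,
    fun H π δ hH h' hh' => hocolim_iso hcg hG h i E e φ hD H π δ hH h' hh'⟩

lemma addClosure_mono {U V : Set C} (h : U ⊆ V) : addClosure C U ⊆ addClosure C V := by
  rintro X ⟨n, f, hf, e⟩
  exact ⟨n, f, fun i => h (hf i), e⟩

lemma starSet_mono {U V U' V' : Set C} (h : U ⊆ V) (h' : U' ⊆ V') :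
    starSet C U U' ⊆ starSet C V V' := by
  rintro X ⟨a, b, f, g, w, hT, ha, hb⟩
  exact ⟨a, b, f, g, w, hT, h ha, h' hb⟩

lemma coprodPow_mono {U V : Set C} (h : U ⊆ V) (n : ℕ) : coprodPow C U n ⊆ coprodPow C V n := by
  induction n with
  | zero => exact subset_rfl
  | succ n ih => exact starSet_mono (addClosure_mono h) ih

lemma smd_mono {U V : Set C} (h : U ⊆ V) : smd C U ⊆ smd C V := by
  rintro X ⟨Y, hY, r⟩
  exact ⟨Y, h hY, r⟩

lemma extClosure_mono {U V : Set C} (h : U ⊆ V) {X : C} (hX : extClosure C U X) :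
    extClosure C V X := by
  induction hX with
  | of hX => exact .of (h hX)
  | zero hX => exact .zero hX
  | ext u v w hT _ _ h1 h2 => exact .ext u v w hT h1 h2

lemma unionIcc_mono {G : ℤ → Set C} {a b a' b' : ℤ} (ha : a' ≤ a) (hb : b ≤ b') :
    unionIcc C G a b ⊆ unionIcc C G a' b' :=
  Set.biUnion_subset_biUnion_left (Set.Icc_subset_Icc ha hb)

lemma smd_compact {U : Set C} (h : U ⊆ compacts C) : smd C U ⊆ compacts C := by
  rintro X ⟨Y, hY, i, r, hir⟩
  exact compact_retract i r hir (h hY)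

lemma ext_compact {U : Set C} (h : U ⊆ compacts C) : {X | extClosure C U X} ⊆ compacts C := by
  intro X hX
  change extClosure C U X at hX
  induction hX with
  | of hX => exact h hX
  | zero hX => exact compact_zero hX
  | ext u v w hT _ _ h1 h2 => exact compact_ext u v w hT h1 h2

lemma coprodPow_compact {U : Set C} (h : U ⊆ compacts C) (n : ℕ) :
    coprodPow C U n ⊆ compacts C := by
  induction n with
  | zero => intro X hX; exact compact_zero hX
  | succ n ih =>
    rintro X ⟨a, b, f, g, w, hT, ⟨m, x, hx, ⟨e⟩⟩, hb⟩
    exact compact_ext f g w hT (compact_coprod x (fun i => h (hx i)) e) (ih hb)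

lemma smd_ext_star {U : Set C} : starSet C (smd C {X | extClosure C U X})
    (smd C {X | extClosure C U X}) ⊆ smd C {X | extClosure C U X} := by
  rintro Y ⟨X, Z, f, g, w, hT, ⟨X', hX', i, r, hir⟩, ⟨Z', hZ', j, s, hjs⟩⟩
  obtain ⟨Y', f', g', hT'⟩ := distinguished_cocone_triangle₂ (s ≫ w ≫ i⟦(1 : ℤ)⟧')
  obtain ⟨b, hb1, hb2⟩ := tr3' hT hT' i j (by rw [← Category.assoc, hjs, Category.id_comp])
  obtain ⟨c, hc1, hc2⟩ := tr3' hT' hT r s (by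
    rw [Category.assoc, Category.assoc, ← Functor.map_comp, hir, CategoryTheory.Functor.map_id,
      Category.comp_id])
  have hiso : IsIso (b ≫ c) := by
    let m : Triangle.mk f g w ⟶ Triangle.mk f g w := 
      { hom₁ := 𝟙 X
        hom₂ := b ≫ c
        hom₃ := 𝟙 Z
        comm₁ := by
          change f ≫ b ≫ c = 𝟙 X ≫ f
          rw [← Category.assoc, hb1, Category.assoc, hc1, ← Category.assoc, hir]
        comm₂ := by
          change g ≫ 𝟙 Z = (b ≫ c) ≫ g
          rw [Category.assoc, ← hc2, ← Category.assoc, ← hb2, Category.assoc, hjs]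
        comm₃ := by
          change w ≫ (𝟙 X)⟦(1 : ℤ)⟧' = 𝟙 Z ≫ w
          rw [CategoryTheory.Functor.map_id, Category.comp_id, Category.id_comp] }
    exact isIso₂_of_isIso₁₃ m hT hT (by change IsIso (𝟙 X); infer_instance)
      (by change IsIso (𝟙 Z); infer_instance)
  exact ⟨Y', .ext f' g' _ hT' hX' hZ', b, c ≫ inv (b ≫ c), by
    rw [← Category.assoc, IsIso.hom_inv_id]⟩

/-- Composites of `n` maps whose fibres are finite sums of objects of `U`. -/
inductive Conic (U : Set C) : ℕ → ∀ (X Y : C), (X ⟶ Y) → Prop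
  | nil (X : C) : Conic U 0 X X (𝟙 X)
  | cons {n : ℕ} {P X Y Z : C} (u : P ⟶ X) (f : X ⟶ Y) (w : Y ⟶ P⟦(1 : ℤ)⟧) (g : Y ⟶ Z) :
      Triangle.mk u f w ∈ (distTriang C) → P ∈ addClosure C U → Conic U n Y Z g →
      Conic U (n + 1) X Z (f ≫ g)

lemma conic_push {U : Set C} {n : ℕ} {X Y : C} {f : X ⟶ Y} (h : Conic U n X Y f) :
    ∀ {X' : C} (a : X ⟶ X'), ∃ (Y' : C) (f' : X' ⟶ Y') (b : Y ⟶ Y'),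
      Conic U n X' Y' f' ∧ f ≫ b = a ≫ f' := by
  induction h with
  | nil X => intro X' a; exact ⟨X', 𝟙 _, a, .nil _, by simp⟩
  | cons u f w g hT hP _ ih =>
    intro X' a
    obtain ⟨Y1, f1, w1, hT1⟩ := distinguished_cocone_triangle (u ≫ a)
    obtain ⟨c, hc, _⟩ := tr3 hT hT1 (𝟙 _) a (by simp)
    obtain ⟨Y', g', b, hg', hb⟩ := ih c
    refine ⟨Y', f1 ≫ g', b, .cons _ f1 w1 g' hT1 hP hg', ?_⟩
    rw [Category.assoc, hb, ← Category.assoc, hc, Category.assoc]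

lemma conic_comp {U : Set C} {n m : ℕ} {X Y Z : C} {f : X ⟶ Y} {g : Y ⟶ Z}
    (hf : Conic U n X Y f) (hg : Conic U m Y Z g) : Conic U (n + m) X Z (f ≫ g) := by
  induction hf with
  | nil X => simpa using hg
  | cons u f w k hT hP _ ih =>
    rw [Category.assoc, Nat.add_right_comm]
    exact .cons u f w _ hT hP (ih hg)

lemma conic_of_coprodPow {U : Set C} (n : ℕ) {X : C} (hX : X ∈ coprodPow C U n) :
    ∃ Y, Conic U n X Y 0 := by
  induction n generalizing X with
  | zero =>
    refine ⟨X, ?_⟩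
    have : (0 : X ⟶ X) = 𝟙 X := IsZero.eq_of_src hX _ _
    rw [this]
    exact .nil X
  | succ n ih =>
    obtain ⟨P, Z, u, f, w, hT, hP, hZ⟩ := hX
    obtain ⟨Y, hY⟩ := ih hZ
    refine ⟨Y, ?_⟩
    have := Conic.cons u f w _ hT hP hY
    rwa [comp_zero] at this

lemma conic_of_smd {U : Set C} (n : ℕ) {X : C} (hX : X ∈ smd C (coprodPow C U n)) :
    ∃ Y, Conic U n X Y 0 := by
  obtain ⟨X', hX', i, r, hir⟩ := hX
  obtain ⟨Y', hY'⟩ := conic_of_coprodPow n hX'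
  obtain ⟨Y, f, b, hf, hb⟩ := conic_push hY' r
  have : f = 0 := by
    rw [← Category.id_comp f, ← hir, Category.assoc, ← hb, zero_comp, comp_zero]
  exact ⟨Y, this ▸ hf⟩

lemma conic_fibre {U : Set C} {n : ℕ} {X Y : C} {f : X ⟶ Y} (h : Conic U n X Y f) :
    ∃ W ∈ coprodPow C U n, ∃ ω : W ⟶ X, ∀ (T : C) (a : T ⟶ X), a ≫ f = 0 → ∃ b, b ≫ ω = a := by
  induction h with
  | nil X =>
    obtain ⟨Z0, hZ0⟩ := HasZeroObject.zero (C := C)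
    refine ⟨Z0, hZ0, 0, fun T a ha => ⟨0, ?_⟩⟩
    rw [Category.comp_id] at ha
    rw [ha, comp_zero]
  | cons u f w g hT hP _ ih =>
    obtain ⟨V, hV, ν, hν⟩ := ih
    obtain ⟨W, p, q, hW⟩ := distinguished_cocone_triangle₂ (ν ≫ w)
    obtain ⟨ω, hω1, hω2⟩ := tr3' hW hT (𝟙 _) ν (by simp)
    refine ⟨W, ⟨_, V, p, q, _, hW, hP, hV⟩, ω, fun T a ha => ?_⟩
    obtain ⟨c, hc⟩ := hν T (a ≫ f) (by rw [Category.assoc, ha])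
    obtain ⟨d, rfl⟩ := cex3 hW c (by
      rw [← Category.assoc, hc, Category.assoc, tz23 hT, comp_zero])
    obtain ⟨k, hk⟩ := cex2 hT (a - d ≫ ω) (by
      rw [Preadditive.sub_comp, ← hc, Category.assoc, Category.assoc, hω2, sub_self])
    refine ⟨d + k ≫ p, ?_⟩
    rw [Preadditive.add_comp, Category.assoc, hω1, Category.id_comp, ← hk]
    abel

lemma smd_coprodPow_star {U : Set C} (p q : ℕ) :
    starSet C (smd C (coprodPow C U p)) (smd C (coprodPow C U q)) ⊆
      smd C (coprodPow C U (p + q)) := by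
  rintro Y ⟨X, Z, f, g, w, hT, hX, hZ⟩
  obtain ⟨X1, hX1⟩ := conic_of_smd p hX
  obtain ⟨Z1, hZ1⟩ := conic_of_smd q hZ
  obtain ⟨Y1, k, b, hk, hb⟩ := conic_push hX1 f
  obtain ⟨l, rfl⟩ := yex2 hT k (by rw [← hb, zero_comp])
  obtain ⟨Y2, m, c, hm, hc⟩ := conic_push hZ1 l
  obtain ⟨W, hW, ω, hω⟩ := conic_fibre (conic_comp hk hm)
  obtain ⟨j, hj⟩ := hω Y (𝟙 Y) (by rw [Category.assoc, ← hc, zero_comp, comp_zero, comp_zero])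
  exact ⟨W, hW, j, ω, hj⟩

end helpers

theorem statement_18 (G Rm : ℤ → Set C) (A B : ℤ)
    (hcg : CompactlyGenerated C) (hG : IsGenSeq C G)
    (h : IsWeakGQuasiApprox C G Rm A) (hB : 0 < B)
    (hBcompact : ∀ i : ℤ, ∀ K ∈ compacts C ∩ Rm i,
      approxTriangle C K (gInt C G (-B - i) (B - i)) (Rm (i + 1))) :
    (∀ i : ℤ, ∀ F ∈ closCompacts C Rm ∩ Rm i,
      ∃ (E : ℕ → C) (e : ∀ n, E n ⟶ E (n + 1)) (φ : ∀ n, E n ⟶ F),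
        (∀ n, e n ≫ φ (n + 1) = φ n) ∧
        (∀ n : ℕ, E n ∈ compacts C) ∧
        (∀ n : ℕ, E n ∈ gInt C G (-B - (n : ℤ) - i) (B - i)) ∧
        (∀ n : ℕ, ∃ (D : C) (g : F ⟶ D) (hh : D ⟶ (E n)⟦(1 : ℤ)⟧),
          Triangle.mk (φ n) g hh ∈ (distTriang C) ∧ D ∈ Rm (i + (n : ℤ) + 1)) ∧
        ∀ (H : C) (π : seqCoprod C E ⟶ H) (δ : H ⟶ (seqCoprod C E)⟦(1 : ℤ)⟧),
          IsHocolim C E e H π δ →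
          ∀ h' : H ⟶ F, (∀ n, seqInj C E n ≫ π ≫ h' = φ n) → IsIso h') ∧
    (IsGQuasiApprox C G Rm A →
      (∀ i : ℤ, ∀ K ∈ compacts C ∩ Rm i,
        approxTriangle C K (gIntPow C G (-B - i) (B - i) B) (Rm (i + 1))) →
      ∀ i : ℤ, ∀ F ∈ closCompacts C Rm ∩ Rm i,
        ∃ (E : ℕ → C) (e : ∀ n, E n ⟶ E (n + 1)) (φ : ∀ n, E n ⟶ F),
          (∀ n, e n ≫ φ (n + 1) = φ n) ∧
          (∀ n : ℕ, E n ∈ compacts C) ∧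
          (∀ n : ℕ, E n ∈ gIntPow C G (-B - (n : ℤ) - i - 1) (B - i) (((n : ℤ) + 1) * B)) ∧
          (∀ n : ℕ, ∃ (D : C) (g : F ⟶ D) (hh : D ⟶ (E n)⟦(1 : ℤ)⟧),
            Triangle.mk (φ n) g hh ∈ (distTriang C) ∧ D ∈ Rm (i + (n : ℤ) + 1)) ∧
          ∀ (H : C) (π : seqCoprod C E ⟶ H) (δ : H ⟶ (seqCoprod C E)⟦(1 : ℤ)⟧),
            IsHocolim C E e H π δ →
            ∀ h' : H ⟶ F, (∀ n, seqInj C E n ≫ π ≫ h' = φ n) → IsIso h') := by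
  have hU : ∀ a b, unionIcc C G a b ⊆ compacts C := fun a b =>
    Set.iUnion₂_subset fun m _ => hG.compact m
  refine ⟨fun i F hF => ?_, fun _ hap i F hF => ?_⟩
  · refine main_generic (S := fun i => gInt C G (-B - i) (B - i))
      (W := fun n => gInt C G (-B - (n : ℤ) - i) (B - i)) hcg hG h.toIsGPreApprox hBcompact i hF
      (fun n => smd_compact (ext_compact (hU _ _))) ?_ ?_
    · exact smd_mono fun X hX => extClosure_mono (unionIcc_mono (by simp) le_rfl) hX
    · intro n
      refine (starSet_mono ?_ ?_).trans smd_ext_star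
      · exact smd_mono fun X hX =>
          extClosure_mono (unionIcc_mono (by push_cast; omega) (by omega)) hX
      · exact smd_mono fun X hX =>
          extClosure_mono (unionIcc_mono (by push_cast; omega) (by omega)) hX
  · refine main_generic (S := fun i => gIntPow C G (-B - i) (B - i) B)
      (W := fun n => gIntPow C G (-B - (n : ℤ) - i - 1) (B - i) (((n : ℤ) + 1) * B))
      hcg hG h.toIsGPreApprox hap i hF
      (fun n => smd_compact (coprodPow_compact (hU _ _) _)) ?_ ?_
    · simp only [Nat.cast_zero, zero_add, one_mul]
      exact smd_mono (coprodPow_mono (unionIcc_mono (by omega) le_rfl) _)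
    · intro n
      have hn : (((n + 1 : ℕ) : ℤ) + 1) * B = ((n : ℤ) + 1) * B + B := by push_cast; ring
      have hn' : ((((n + 1 : ℕ) : ℤ) + 1) * B).toNat = (((n : ℤ) + 1) * B).toNat + B.toNat := by
        rw [hn, Int.toNat_add (by positivity) hB.le]
      simp only [gIntPow]
      rw [hn']
      refine (starSet_mono ?_ ?_).trans (smd_coprodPow_star _ _)
      · exact smd_mono (coprodPow_mono (unionIcc_mono (by push_cast; omega) (by omega)) _)
      · exact smd_mono (coprodPow_mono (unionIcc_mono (by push_cast; omega) (by omega)) _)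

end GApprox
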